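/- arXiv:1802.04779 — 2 statements merged into one kernel-verified Lean document; each statement's English description precedes it below -/
import Mathlib

section
/- Let α, β > −1, n ≥ 1, let u : ℝ → ℝ be twice differentiable, and let x_0,…,x_n be distinct points such that u(x_0) = −1, u(x_1),…,u(x_n) are the n distinct roots of the Jacobi polynomial G = P_n^{α,β+1}, u(x_0),…,u(x_n) are pairwise distinct, and u'(x_i) ≠ 0 for all i. Let L_j be the generalized Lagrange functions on these nodes and D the matrix with entries d_{kj} = L_j'(x_k). Then for all interior indices j ≠ k with 1 ≤ j, k ≤ n, d_{kj} = ( u'(x_k) (u(x_k) − u(x_0)) / ( (u(x_j) − u(x_0)) (u(x_k) − u(x_j)) ) ) · ( P_{n−1}^{α+1,β+2}(u(x_k)) / P_{n−1}^{α+1,β+2}(u(x_j)) ). -/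
/-- Jacobi polynomials `P_n^{α,β}` defined by the three-term recurrence. -/
noncomputable def jacobiP (α β : ℝ) : ℕ → ℝ → ℝ
  | 0, _ => 1
  | 1, x => (α + β + 2) * x / 2 + (α - β) / 2
  | K + 2, x =>
      ((2 * ((K : ℝ) + 1) + α + β + 1) * (2 * ((K : ℝ) + 1) + α + β + 2) /
            (2 * (((K : ℝ) + 1) + 1) * (((K : ℝ) + 1) + α + β + 1)) * x -
          (β ^ 2 - α ^ 2) * (2 * ((K : ℝ) + 1) + α + β + 1) /
            (2 * (((K : ℝ) + 1) + 1) * (((K : ℝ) + 1) + α + β + 1) *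
              (2 * ((K : ℝ) + 1) + α + β))) *
        jacobiP α β (K + 1) x -
      (((K : ℝ) + 1) + α) * (((K : ℝ) + 1) + β) * (2 * ((K : ℝ) + 1) + α + β + 2) /
            ((((K : ℝ) + 1) + 1) * (((K : ℝ) + 1) + α + β + 1) * (2 * ((K : ℝ) + 1) + α + β)) *
        jacobiP α β K x

open Finset

/-- `glW u x t = ∏ i, (u t − u (x i))`. -/
noncomputable def glW (u : ℝ → ℝ) {n : ℕ} (x : Fin (n + 1) → ℝ) : ℝ → ℝ :=
  fun t => ∏ i, (u t - u (x i))

/-- Generalized Lagrange function `L_j(t) = κ_j ∏_{i ≠ j} (u t − u (x i))`,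
with `κ_j = u'(x_j) / w'(x_j)`. -/
noncomputable def glL (u : ℝ → ℝ) {n : ℕ} (x : Fin (n + 1) → ℝ) (j : Fin (n + 1)) : ℝ → ℝ :=
  fun t => (deriv u (x j) / deriv (glW u x) (x j)) *
    ∏ i ∈ Finset.univ.erase j, (u t - u (x i))


/-- Rising factorial. -/
noncomputable def rpoch (y : ℝ) (k : ℕ) : ℝ := ∏ i ∈ Finset.range k, (y + i)

lemma rpoch_zero (y : ℝ) : rpoch y 0 = 1 := by simp [rpoch]

lemma rpoch_succ (y : ℝ) (k : ℕ) : rpoch y (k + 1) = rpoch y k * (y + k) := by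
  simp [rpoch, Finset.prod_range_succ]

lemma rpoch_succ' (y : ℝ) (k : ℕ) : rpoch y (k + 1) = y * rpoch (y + 1) k := by
  simp only [rpoch, Finset.prod_range_succ']
  rw [mul_comm]
  congr 1
  · simp
  · apply Finset.prod_congr rfl
    intro i _
    push_cast
    ring

lemma rpoch_pos (y : ℝ) (hy : 0 < y) (k : ℕ) : 0 < rpoch y k := by
  apply Finset.prod_pos
  intro i _
  positivity

lemma rpoch_neg (n k : ℕ) (h : n < k) : rpoch (-(n : ℝ)) k = 0 := by
  apply Finset.prod_eq_zero (Finset.mem_range.2 h)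
  simp

/-- Coefficient of `((1-x)/2)^k` in the Jacobi polynomial. -/
noncomputable def jcoef (a b : ℝ) (n k : ℕ) : ℝ :=
  rpoch (a + 1) n / (n.factorial : ℝ) *
    (rpoch (-(n : ℝ)) k * rpoch (n + a + b + 1) k / (rpoch (a + 1) k * (k.factorial : ℝ)))

lemma jcoef_gt (a b : ℝ) (n k : ℕ) (h : n < k) : jcoef a b n k = 0 := by
  simp [jcoef, rpoch_neg n k h]

noncomputable def jA (a b : ℝ) (K : ℕ) : ℝ :=
  (2 * ((K : ℝ) + 1) + a + b + 1) * (2 * ((K : ℝ) + 1) + a + b + 2) /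
            (2 * (((K : ℝ) + 1) + 1) * (((K : ℝ) + 1) + a + b + 1))
noncomputable def jB (a b : ℝ) (K : ℕ) : ℝ :=
  (b ^ 2 - a ^ 2) * (2 * ((K : ℝ) + 1) + a + b + 1) /
            (2 * (((K : ℝ) + 1) + 1) * (((K : ℝ) + 1) + a + b + 1) *
              (2 * ((K : ℝ) + 1) + a + b))
noncomputable def jC (a b : ℝ) (K : ℕ) : ℝ :=
  (((K : ℝ) + 1) + a) * (((K : ℝ) + 1) + b) * (2 * ((K : ℝ) + 1) + a + b + 2) /
            ((((K : ℝ) + 1) + 1) * (((K : ℝ) + 1) + a + b + 1) * (2 * ((K : ℝ) + 1) + a + b))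

lemma jcoef_rec_zero (a b : ℝ) (ha : -1 < a) (hab : -2 < a + b) (n : ℕ) :
    jcoef a b (n + 2) 0 = (jA a b n - jB a b n) * jcoef a b (n + 1) 0 - jC a b n * jcoef a b n 0 := by
  have hn : (0 : ℝ) ≤ n := Nat.cast_nonneg n
  have h1 : (n : ℝ) + 1 + a + b + 1 ≠ 0 := by intro h; linarith
  have h2 : 2 * ((n : ℝ) + 1) + a + b ≠ 0 := by intro h; linarith
  have h3 : (n : ℝ) + 1 + 1 ≠ 0 := by positivity
  have h4 : (n : ℝ) + 1 ≠ 0 := by positivity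
  have h5 : (n.factorial : ℝ) ≠ 0 := by positivity
  simp only [jcoef, rpoch_zero, rpoch_succ, jA, jB, jC, Nat.factorial_succ, Nat.factorial_zero]
  push_cast
  generalize hd : 2 * ((n : ℝ) + 1) + a + b = d at *
  generalize he : (n : ℝ) + 1 + a + b + 1 = e at *
  field_simp
  rw [← hd, ← he]
  ring

lemma jcoef_rec_one (a b : ℝ) (ha : -1 < a) (hab : -2 < a + b) (n : ℕ) :
    jcoef a b (n + 2) 1 = (jA a b n - jB a b n) * jcoef a b (n + 1) 1
      - 2 * jA a b n * jcoef a b (n + 1) 0 - jC a b n * jcoef a b n 1 := by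
  have hn : (0 : ℝ) ≤ n := Nat.cast_nonneg n
  have h1 : (n : ℝ) + 1 + a + b + 1 ≠ 0 := by intro h; linarith
  have h2 : 2 * ((n : ℝ) + 1) + a + b ≠ 0 := by intro h; linarith
  have h3 : (n : ℝ) + 1 + 1 ≠ 0 := by positivity
  have h4 : (n : ℝ) + 1 ≠ 0 := by positivity
  have h5 : (n.factorial : ℝ) ≠ 0 := by positivity
  have h6 : a + 1 ≠ 0 := by intro h; linarith
  have e1 : ∀ y, rpoch y 1 = y := fun y => by simp [rpoch]
  have e0 : ∀ y, rpoch y 0 = 1 := fun y => by simp [rpoch]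
  simp only [jcoef, e1, e0, jA, jB, jC]
  rw [show n + 2 = (n + 1) + 1 from rfl, rpoch_succ, rpoch_succ]
  simp only [Nat.factorial_succ, Nat.factorial_zero]
  push_cast
  generalize hd : 2 * ((n : ℝ) + 1) + a + b = d at *
  generalize he : (n : ℝ) + 1 + a + b + 1 = e at *
  field_simp
  rw [← hd, ← he]
  ring

lemma jcoef_rec_succ (a b : ℝ) (ha : -1 < a) (hab : -2 < a + b) (n k : ℕ) :
    jcoef a b (n + 2) (k + 2) = (jA a b n - jB a b n) * jcoef a b (n + 1) (k + 2)
      - 2 * jA a b n * jcoef a b (n + 1) (k + 1) - jC a b n * jcoef a b n (k + 2) := by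
  have hn : (0 : ℝ) ≤ n := Nat.cast_nonneg n
  have hk : (0 : ℝ) ≤ k := Nat.cast_nonneg k
  have h1 : (n : ℝ) + 1 + a + b + 1 ≠ 0 := by intro h; linarith
  have h2 : 2 * ((n : ℝ) + 1) + a + b ≠ 0 := by intro h; linarith
  have h3 : (n : ℝ) + 1 + 1 ≠ 0 := by positivity
  have h4 : (n : ℝ) + 1 ≠ 0 := by positivity
  have h5 : (n.factorial : ℝ) ≠ 0 := by positivity
  have h6 : a + 1 + k ≠ 0 := by intro h; linarith
  have h7 : a + 1 + (k + 1) ≠ 0 := by intro h; linarith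
  have h8 : (k.factorial : ℝ) ≠ 0 := by positivity
  have h9 : (k : ℝ) + 1 ≠ 0 := by positivity
  have h10 : (k : ℝ) + 1 + 1 ≠ 0 := by positivity
  have h11 : rpoch (a + 1) k ≠ 0 := (rpoch_pos _ (by linarith) k).ne'
  have p1 : rpoch (-((n + 2 : ℕ) : ℝ)) (k + 2) = (-n - 2) * ((-n - 1) * rpoch (-n) k) := by
    rw [rpoch_succ', rpoch_succ']; push_cast; ring_nf
  have p2 : rpoch (-((n + 1 : ℕ) : ℝ)) (k + 2) = (-n - 1) * (rpoch (-n) k * (-n + k)) := by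
    rw [rpoch_succ', rpoch_succ]; push_cast; ring_nf
  have p3 : rpoch (-((n + 1 : ℕ) : ℝ)) (k + 1) = (-n - 1) * rpoch (-n) k := by
    rw [rpoch_succ']; push_cast; ring_nf
  have p4 : rpoch (-(n : ℝ)) (k + 2) = rpoch (-n) k * (-n + k) * (-n + (k + 1)) := by
    rw [rpoch_succ, rpoch_succ]; push_cast; ring
  have q1 : rpoch (((n + 2 : ℕ) : ℝ) + a + b + 1) (k + 2) =
      rpoch (n + a + b + 3) k * (n + a + b + 3 + k) * (n + a + b + 3 + (k + 1)) := by
    rw [rpoch_succ, rpoch_succ]; push_cast; ring_nf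
  have q2 : rpoch (((n + 1 : ℕ) : ℝ) + a + b + 1) (k + 2) =
      (n + a + b + 2) * (rpoch (n + a + b + 3) k * (n + a + b + 3 + k)) := by
    rw [rpoch_succ', rpoch_succ]; push_cast; ring_nf
  have q3 : rpoch (((n + 1 : ℕ) : ℝ) + a + b + 1) (k + 1) =
      (n + a + b + 2) * (rpoch (n + a + b + 3) k) := by
    rw [rpoch_succ']; push_cast; ring_nf
  have q4 : rpoch ((n : ℝ) + a + b + 1) (k + 2) =
      (n + a + b + 1) * ((n + a + b + 2) * rpoch (n + a + b + 3) k) := by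
    rw [rpoch_succ', rpoch_succ']; ring_nf
  have r1 : rpoch (a + 1) (k + 1) = rpoch (a + 1) k * (a + 1 + k) := rpoch_succ _ _
  have r2 : rpoch (a + 1) (k + 2) = rpoch (a + 1) k * (a + 1 + k) * (a + 1 + (k + 1)) := by
    rw [rpoch_succ, rpoch_succ]; push_cast; ring
  have s1 : rpoch (a + 1) (n + 1) = rpoch (a + 1) n * (a + 1 + n) := rpoch_succ _ _
  have s2 : rpoch (a + 1) (n + 2) = rpoch (a + 1) n * (a + 1 + n) * (a + 1 + (n + 1)) := by
    rw [rpoch_succ, rpoch_succ]; push_cast; ring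
  simp only [jcoef, jA, jB, jC, p1, p2, p3, p4, q1, q2, q3, q4, r1, r2, s1, s2, Nat.factorial_succ]
  push_cast
  generalize rpoch (a + 1) k = R at *
  generalize rpoch (a + 1) n = S at *
  generalize rpoch (-(n : ℝ)) k = P at *
  generalize rpoch (n + a + b + 3) k = Q at *
  generalize hd : 2 * ((n : ℝ) + 1) + a + b = d at *
  generalize he : (n : ℝ) + 1 + a + b + 1 = e at *
  field_simp
  rw [← hd, ← he]
  ring

lemma jcoef_rec (a b : ℝ) (ha : -1 < a) (hab : -2 < a + b) (n k : ℕ) :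
    jcoef a b (n + 2) (k + 1) = (jA a b n - jB a b n) * jcoef a b (n + 1) (k + 1)
      - 2 * jA a b n * jcoef a b (n + 1) k - jC a b n * jcoef a b n (k + 1) := by
  cases k with
  | zero => exact jcoef_rec_one a b ha hab n
  | succ k => exact jcoef_rec_succ a b ha hab n k

lemma jacobi_sum (a b : ℝ) (ha : -1 < a) (hab : -2 < a + b) (x : ℝ) (n : ℕ) :
    ∀ N, n < N → jacobiP a b n x = ∑ k ∈ Finset.range N, jcoef a b n k * ((1 - x) / 2) ^ k := by
  induction n using Nat.twoStepInduction with
  | zero =>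
    intro N hN
    obtain ⟨M, rfl⟩ : ∃ M, N = M + 1 := ⟨N - 1, by omega⟩
    rw [Finset.sum_range_succ', Finset.sum_eq_zero]
    · simp [jacobiP, jcoef, rpoch_zero]
    · intro i _
      rw [jcoef_gt _ _ _ _ (by omega), zero_mul]
  | one =>
    intro N hN
    obtain ⟨M, rfl⟩ : ∃ M, N = M + 2 := ⟨N - 2, by omega⟩
    rw [Finset.sum_range_succ', Finset.sum_range_succ', Finset.sum_eq_zero]
    · have h6 : a + 1 ≠ 0 := by intro h; linarith
      simp [jacobiP, jcoef, rpoch_zero, rpoch_succ]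
      field_simp
      ring
    · intro i _
      rw [jcoef_gt _ _ _ _ (by omega), zero_mul]
  | more n ih1 ih2 =>
    intro N hN
    obtain ⟨M, rfl⟩ : ∃ M, N = M + 1 := ⟨N - 1, by omega⟩
    have e : jacobiP a b (n + 2) x =
        (jA a b n - jB a b n) * jacobiP a b (n + 1) x
          - 2 * jA a b n * ((1 - x) / 2) * jacobiP a b (n + 1) x - jC a b n * jacobiP a b n x := by
      rw [jacobiP, jA, jB, jC]
      ring
    rw [e]
    nth_rw 1 [ih2 (M + 1) (by omega)]
    rw [ih2 M (by omega), ih1 (M + 1) (by omega)]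
    rw [Finset.sum_range_succ', Finset.sum_range_succ', Finset.sum_range_succ',
      jcoef_rec_zero a b ha hab]
    simp only [jcoef_rec a b ha hab, sub_mul, Finset.sum_sub_distrib, mul_add, Finset.mul_sum]
    have e1 : ∀ c d : ℝ, ∀ k, c * (d * ((1 - x) / 2) ^ (k + 1)) = c * d * ((1 - x) / 2) ^ (k + 1) :=
      fun c d k => by ring
    have e2 : ∀ c d : ℝ, ∀ k, c * ((1 - x) / 2) * (d * ((1 - x) / 2) ^ k)
        = c * d * ((1 - x) / 2) ^ (k + 1) := fun c d k => by ring
    simp only [e1, e2]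
    ring

/-- Jacobi polynomial as a polynomial. -/
noncomputable def jpoly (a b : ℝ) (n : ℕ) : Polynomial ℝ :=
  ∑ k ∈ Finset.range (n + 1),
    Polynomial.C (jcoef a b n k) * (Polynomial.C (1 / 2) * (1 - Polynomial.X)) ^ k

lemma jpoly_eval (a b : ℝ) (ha : -1 < a) (hab : -2 < a + b) (n : ℕ) (x : ℝ) :
    (jpoly a b n).eval x = jacobiP a b n x := by
  rw [jacobi_sum a b ha hab x n (n + 1) (by omega), jpoly, Polynomial.eval_finset_sum]
  apply Finset.sum_congr rfl
  intro k _
  simp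
  left
  ring

lemma jpoly_natDegree (a b : ℝ) (n : ℕ) : (jpoly a b n).natDegree ≤ n := by
  apply Polynomial.natDegree_sum_le_of_forall_le
  intro k hk
  have := Finset.mem_range.1 hk
  have h : (Polynomial.C (1 / 2 : ℝ) * (1 - Polynomial.X)).natDegree ≤ 1 := by
    compute_degree
  refine (Polynomial.natDegree_C_mul_le _ _).trans ?_
  refine (Polynomial.natDegree_pow_le_of_le k h).trans ?_
  omega

lemma jpoly_ne (a b : ℝ) (ha : -1 < a) (n : ℕ) : jpoly a b n ≠ 0 := by
  intro h
  have h1 := congrArg (Polynomial.eval 1) h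
  rw [jpoly, Polynomial.eval_finset_sum, Finset.sum_range_succ', Finset.sum_eq_zero] at h1
  · have := (rpoch_pos (a + 1) (by linarith) n).ne'
    simp [jcoef, rpoch_zero, this, Nat.factorial_ne_zero] at h1
  · intro i _
    simp

lemma jcoef_deriv (a b : ℝ) (ha : -1 < a) (n k : ℕ) :
    jcoef a b (n + 1) (k + 1) * (k + 1) =
      -(n + a + b + 2) * jcoef (a + 1) (b + 1) n k := by
  have h5 : (n.factorial : ℝ) ≠ 0 := by positivity
  have h8 : (k.factorial : ℝ) ≠ 0 := by positivity
  have h9 : (k : ℝ) + 1 ≠ 0 := by positivity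
  have h4 : (n : ℝ) + 1 ≠ 0 := by positivity
  have h6 : a + 1 ≠ 0 := by intro h; linarith
  have h11 : rpoch (a + 1 + 1) k ≠ 0 := (rpoch_pos _ (by linarith) k).ne'
  have p : rpoch (-((n + 1 : ℕ) : ℝ)) (k + 1) = (-n - 1) * rpoch (-n) k := by
    rw [rpoch_succ']; push_cast; ring_nf
  have q : rpoch (((n + 1 : ℕ) : ℝ) + a + b + 1) (k + 1) =
      (n + a + b + 2) * rpoch (n + (a + 1) + (b + 1) + 1) k := by
    rw [rpoch_succ']; push_cast; ring_nf
  simp only [jcoef, p, q, rpoch_succ' (a + 1), Nat.factorial_succ]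
  push_cast
  field_simp
  ring

lemma jacobi_hasDerivAt (a b : ℝ) (ha : -1 < a) (hab : -2 < a + b) (n : ℕ) (x : ℝ) :
    HasDerivAt (fun y => jacobiP a b (n + 1) y)
      ((n + a + b + 2) / 2 * jacobiP (a + 1) (b + 1) n x) x := by
  have e : (fun y => jacobiP a b (n + 1) y) =
      fun y => ∑ k ∈ Finset.range (n + 2), jcoef a b (n + 1) k * ((1 - y) / 2) ^ k :=
    funext fun y => jacobi_sum a b ha hab y (n + 1) (n + 2) (by omega)
  rw [e]
  have hb : HasDerivAt (fun y : ℝ => (1 - y) / 2) (-1 / 2) x :=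
    ((hasDerivAt_id x).const_sub 1).div_const 2
  have hd := HasDerivAt.fun_sum (u := Finset.range (n + 2))
    (fun k _ => (hb.fun_pow k).const_mul (jcoef a b (n + 1) k))
  refine hd.congr_deriv ?_
  rw [Finset.sum_range_succ', jacobi_sum (a + 1) (b + 1) (by linarith) (by linarith) x n (n + 1)
    (by omega), Finset.mul_sum]
  simp only [Nat.cast_zero, zero_mul, mul_zero, add_zero]
  apply Finset.sum_congr rfl
  intro k _
  have := jcoef_deriv a b ha n k
  simp only [Nat.add_sub_cancel]
  push_cast
  linear_combination (-1 / 2 * ((1 - x) / 2) ^ k) * this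

lemma deriv_prod_root {ι : Type*} [DecidableEq ι] (f : ℝ → ℝ) (hf : Differentiable ℝ f)
    (c : ι → ℝ) (s : Finset ι) (k : ι) (hk : k ∈ s) (t : ℝ) (ht : f t = c k) :
    HasDerivAt (fun y => ∏ i ∈ s, (f y - c i)) (deriv f t * ∏ i ∈ s.erase k, (c k - c i)) t := by
  have e : (fun y => ∏ i ∈ s, (f y - c i)) =
      fun y => (f y - c k) * ∏ i ∈ s.erase k, (f y - c i) :=
    funext fun y => (Finset.mul_prod_erase s _ hk).symm
  rw [e]
  have h1 : HasDerivAt (fun y => f y - c k) (deriv f t) t := (hf t).hasDerivAt.sub_const _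
  have h2 : DifferentiableAt ℝ (fun y => ∏ i ∈ s.erase k, (f y - c i)) t := by
    fun_prop
  refine (h1.mul h2.hasDerivAt).congr_deriv ?_
  simp [ht]

lemma jacobi_factor (a b : ℝ) (ha : -1 < a) (hab : -2 < a + b) {ι : Type*} [DecidableEq ι]
    (s : Finset ι) (c : ι → ℝ) (hc : Function.Injective c)
    (h : ∀ i ∈ s, jacobiP a b s.card (c i) = 0) :
    ∃ C : ℝ, C ≠ 0 ∧ ∀ y, jacobiP a b s.card y = C * ∏ i ∈ s, (y - c i) := by
  have hdvd : (∏ i ∈ s, (Polynomial.X - Polynomial.C (c i))) ∣ jpoly a b s.card := by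
    apply Finset.prod_dvd_of_coprime
    · intro i _ j _ hij
      exact Polynomial.pairwise_coprime_X_sub_C hc hij
    · intro i hi
      rw [Polynomial.dvd_iff_isRoot, Polynomial.IsRoot, jpoly_eval a b ha hab]
      exact h i hi
  obtain ⟨R, hR⟩ := hdvd
  have hne := jpoly_ne a b ha s.card
  have hdeg := jpoly_natDegree a b s.card
  have hR0 : R ≠ 0 := by
    rintro rfl
    simp at hR
    exact hne hR
  have hm : (∏ i ∈ s, (Polynomial.X - Polynomial.C (c i))).Monic :=
    Polynomial.monic_prod_of_monic _ _ fun i _ => Polynomial.monic_X_sub_C _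
  have hnd : (∏ i ∈ s, (Polynomial.X - Polynomial.C (c i))).natDegree = s.card := by
    rw [Polynomial.natDegree_prod_of_monic _ _ fun i _ => Polynomial.monic_X_sub_C _]
    simp
  rw [hR, hm.natDegree_mul' hR0, hnd] at hdeg
  have hRc := Polynomial.eq_C_of_natDegree_eq_zero (p := R) (by omega)
  refine ⟨R.coeff 0, ?_, ?_⟩
  · intro h0
    rw [h0, Polynomial.C_0] at hRc
    exact hR0 hRc
  · intro y
    rw [← jpoly_eval a b ha hab, hR, hRc, Polynomial.eval_mul, Polynomial.eval_prod]
    simp [mul_comm]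

theorem gl_jacobi_radau2_interior (α β : ℝ) (hα : -1 < α) (hβ : -1 < β)
    (n : ℕ) (hn : 1 ≤ n) (u : ℝ → ℝ) (x : Fin (n + 1) → ℝ)
    (hu : Differentiable ℝ u)
    (hu2 : Differentiable ℝ (deriv u))
    (hx : Function.Injective x)
    (hux : Function.Injective (u ∘ x))
    (hu' : ∀ i, deriv u (x i) ≠ 0)
    (hfirst : u (x 0) = -1)
    (hroots : ∀ i : Fin (n + 1), 0 < (i : ℕ) → jacobiP α (β + 1) n (u (x i)) = 0)
    (j k : Fin (n + 1)) (hj : 1 ≤ (j : ℕ)) (hk : 1 ≤ (k : ℕ)) (hjk : j ≠ k) :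
    deriv (glL u x j) (x k) =
      (deriv u (x k) * (u (x k) - u (x 0)) /
          ((u (x j) - u (x 0)) * (u (x k) - u (x j)))) *
        (jacobiP (α + 1) (β + 2) (n - 1) (u (x k)) /
          jacobiP (α + 1) (β + 2) (n - 1) (u (x j))) := by
  obtain ⟨m, rfl⟩ : ∃ m, n = m + 1 := ⟨n - 1, by omega⟩
  set c : Fin (m + 1 + 1) → ℝ := fun i => u (x i) with hc
  have hcinj : Function.Injective c := hux
  have hcard : (Finset.univ.erase (0 : Fin (m + 1 + 1))).card = m + 1 := by
    rw [Finset.card_erase_of_mem (Finset.mem_univ _)]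
    simp
  have hab : -2 < α + (β + 1) := by linarith
  obtain ⟨C, hC, hfac⟩ := jacobi_factor α (β + 1) hα hab
    (Finset.univ.erase (0 : Fin (m + 1 + 1))) c hcinj (by
      intro i hi
      rw [hcard]
      apply hroots i
      have := Finset.ne_of_mem_erase hi
      exact Nat.pos_of_ne_zero fun h => this (Fin.ext h))
  rw [hcard] at hfac
  have hj0 : j ≠ 0 := by rintro rfl; simp at hj
  have hk0 : k ≠ 0 := by rintro rfl; simp at hk
  set S := Finset.univ.erase (0 : Fin (m + 1 + 1)) with hS
  -- derivative of the Jacobi polynomial at a node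
  have hP : ∀ i, i ≠ 0 → ((m : ℝ) + α + (β + 1) + 2) / 2 * jacobiP (α + 1) (β + 2) m (c i)
      = C * ∏ l ∈ S.erase i, (c i - c l) := by
    intro i hi
    have h1 := jacobi_hasDerivAt α (β + 1) hα hab m (c i)
    have h2 := (deriv_prod_root (fun y => y) differentiable_id c S i
      (Finset.mem_erase.2 ⟨hi, Finset.mem_univ _⟩) (c i) rfl).const_mul C
    rw [funext hfac] at h1
    have h3 := h1.unique h2
    rw [show β + 1 + 1 = β + 2 by ring] at h3
    rw [h3]
    simp
  have hmne : ((m : ℝ) + α + (β + 1) + 2) / 2 ≠ 0 := by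
    have : (0 : ℝ) ≤ m := Nat.cast_nonneg m
    intro h
    linarith
  have hW : ∀ i, ∏ l ∈ S.erase i, (c i - c l) ≠ 0 := by
    intro i
    rw [Finset.prod_ne_zero_iff]
    intro l hl
    exact sub_ne_zero.2 fun h => (Finset.ne_of_mem_erase hl) (hcinj h).symm
  have hsub : ∀ i l, i ≠ l → c i - c l ≠ 0 := fun i l h => sub_ne_zero.2 fun h' => h (hcinj h')
  have hJ : jacobiP (α + 1) (β + 2) m (c k) / jacobiP (α + 1) (β + 2) m (c j)
      = (∏ l ∈ S.erase k, (c k - c l)) / ∏ l ∈ S.erase j, (c j - c l) := by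
    rw [← mul_div_mul_left _ _ hmne, hP k hk0, hP j hj0, mul_div_mul_left _ _ hC]
  have hw : deriv (glW u x) (x j) = deriv u (x j) * ∏ i ∈ Finset.univ.erase j, (c j - c i) :=
    (deriv_prod_root u hu c Finset.univ j (Finset.mem_univ _) (x j) rfl).deriv
  have hL : deriv (glL u x j) (x k) = (deriv u (x j) / deriv (glW u x) (x j)) *
      (deriv u (x k) * ∏ i ∈ (Finset.univ.erase j).erase k, (c k - c i)) :=
    ((deriv_prod_root u hu c (Finset.univ.erase j) k
      (Finset.mem_erase.2 ⟨hjk.symm, Finset.mem_univ _⟩) (x k) rfl).const_mul _).deriv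
  have hprodj : ∏ i ∈ Finset.univ.erase j, (c j - c i)
      = (c j - c 0) * ∏ l ∈ S.erase j, (c j - c l) := by
    rw [hS, Finset.erase_right_comm]
    exact (Finset.mul_prod_erase _ _ (Finset.mem_erase.2 ⟨hj0.symm, Finset.mem_univ _⟩)).symm
  have hprodk : (c k - c j) * ∏ i ∈ (Finset.univ.erase j).erase k, (c k - c i)
      = (c k - c 0) * ∏ l ∈ S.erase k, (c k - c l) := by
    rw [hS, Finset.erase_right_comm (a := 0), Finset.erase_right_comm (a := j),
      Finset.mul_prod_erase _ (fun i => c k - c i)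
        (Finset.mem_erase.2 ⟨hjk, Finset.mem_univ _⟩),
      Finset.mul_prod_erase _ (fun i => c k - c i)
        (Finset.mem_erase.2 ⟨hk0.symm, Finset.mem_univ _⟩)]
  rw [hL, hw, hprodj]
  change _ = (deriv u (x k) * (c k - c 0) / ((c j - c 0) * (c k - c j))) *
    (jacobiP (α + 1) (β + 2) m (c k) / jacobiP (α + 1) (β + 2) m (c j))
  rw [hJ]
  have n1 := hsub j 0 hj0
  have n2 := hsub k j hjk.symm
  have n3 := hW j
  have n4 := hu' j
  field_simp
  linear_combination deriv u (x k) * hprodk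
end

section
/- Let α, β > −1, n ≥ 1, let u : ℝ → ℝ be twice differentiable, and let x_0,…,x_n be distinct points such that u(x_0) = −1, u(x_1),…,u(x_n) are the n distinct roots of the Jacobi polynomial G = P_n^{α,β+1}, u(x_0),…,u(x_n) are pairwise distinct, and u'(x_i) ≠ 0 for all i. Let L_j be the generalized Lagrange functions on these nodes and D the matrix with entries d_{kj} = L_j'(x_k). Then for every k with 1 ≤ k ≤ n, the entry in the first column satisfies d_{k0} = u'(x_k) · P_{n−1}^{α+1,β+2}(u(x_k)) · n! · (α+β+n+2) · Γ(β+2) / (2 (−1)^n Γ(β+2+n)). -/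
open Finset

open Polynomial in
/-- Jacobi polynomial in the variable `y = (x+1)/2`. -/
noncomputable def jacY (a b : ℝ) : ℕ → ℝ[X]
  | 0 => 1
  | 1 => C (a + b + 2) * X - C (b + 1)
  | K + 2 =>
      C (2 * ((2 * ((K : ℝ) + 1) + a + b + 1) * (2 * ((K : ℝ) + 1) + a + b + 2) /
            (2 * (((K : ℝ) + 1) + 1) * (((K : ℝ) + 1) + a + b + 1)))) * (X * jacY a b (K + 1)) -
      C ((2 * ((K : ℝ) + 1) + a + b + 1) * (2 * ((K : ℝ) + 1) + a + b + 2) /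
            (2 * (((K : ℝ) + 1) + 1) * (((K : ℝ) + 1) + a + b + 1)) +
          (b ^ 2 - a ^ 2) * (2 * ((K : ℝ) + 1) + a + b + 1) /
            (2 * (((K : ℝ) + 1) + 1) * (((K : ℝ) + 1) + a + b + 1) *
              (2 * ((K : ℝ) + 1) + a + b))) * jacY a b (K + 1) -
      C ((((K : ℝ) + 1) + a) * (((K : ℝ) + 1) + b) * (2 * ((K : ℝ) + 1) + a + b + 2) /
            ((((K : ℝ) + 1) + 1) * (((K : ℝ) + 1) + a + b + 1) * (2 * ((K : ℝ) + 1) + a + b))) *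
        jacY a b K

theorem jacY_eval (a b : ℝ) (x : ℝ) : ∀ n, (jacY a b n).eval ((x + 1) / 2) = jacobiP a b n x
  | 0 => by simp [jacY, jacobiP]
  | 1 => by simp [jacY, jacobiP]; ring
  | K + 2 => by
      rw [jacY, jacobiP, ← jacY_eval a b x (K + 1), ← jacY_eval a b x K]
      simp only [Polynomial.eval_sub, Polynomial.eval_mul, Polynomial.eval_C, Polynomial.eval_X]
      ring

/-- rising factorial -/
noncomputable def poch (z : ℝ) : ℕ → ℝ
  | 0 => 1
  | k + 1 => poch z k * (z + k)

theorem poch_left (z : ℝ) (k : ℕ) : poch z (k + 1) = z * poch (z + 1) k := by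
  induction k with
  | zero => simp [poch]
  | succ k ih =>
    rw [poch, ih, poch]; push_cast; ring

theorem poch_pos (z : ℝ) (hz : 0 < z) (k : ℕ) : 0 < poch z k := by
  induction k with
  | zero => simp [poch]
  | succ k ih => rw [poch]; positivity

theorem poch_neg (n : ℕ) (k : ℕ) (h : n < k) : poch (-(n : ℝ)) k = 0 := by
  induction k with
  | zero => omega
  | succ k ih =>
    rw [poch]
    rcases Nat.lt_succ_iff_lt_or_eq.mp h with h | h
    · rw [ih h]; simp
    · subst h; simp

theorem poch_gamma (z : ℝ) (hz : 0 < z) (n : ℕ) :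
    Real.Gamma (z + n) = poch z n * Real.Gamma z := by
  induction n with
  | zero => simp [poch]
  | succ n ih =>
    have : z + ((n + 1 : ℕ) : ℝ) = (z + n) + 1 := by push_cast; ring
    rw [this, Real.Gamma_add_one (by positivity), ih, poch]; ring

/-- explicit coefficients -/
noncomputable def jc (a b : ℝ) (n k : ℕ) : ℝ :=
  (-1) ^ n * poch (b + 1) n / n.factorial *
    (poch (-(n : ℝ)) k * poch (n + a + b + 1) k / (poch (b + 1) k * k.factorial))

theorem jc_rec (a b : ℝ) (hb : -1 < b) (hs : -1 < a + b) (n k : ℕ) :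
    jc a b (n + 2) (k + 2) =
      (2 * ((2 * ((n : ℝ) + 1) + a + b + 1) * (2 * ((n : ℝ) + 1) + a + b + 2) /
            (2 * (((n : ℝ) + 1) + 1) * (((n : ℝ) + 1) + a + b + 1)))) * jc a b (n + 1) (k + 1) -
      ((2 * ((n : ℝ) + 1) + a + b + 1) * (2 * ((n : ℝ) + 1) + a + b + 2) /
            (2 * (((n : ℝ) + 1) + 1) * (((n : ℝ) + 1) + a + b + 1)) +
          (b ^ 2 - a ^ 2) * (2 * ((n : ℝ) + 1) + a + b + 1) /
            (2 * (((n : ℝ) + 1) + 1) * (((n : ℝ) + 1) + a + b + 1) *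
              (2 * ((n : ℝ) + 1) + a + b))) * jc a b (n + 1) (k + 2) -
      ((((n : ℝ) + 1) + a) * (((n : ℝ) + 1) + b) * (2 * ((n : ℝ) + 1) + a + b + 2) /
            ((((n : ℝ) + 1) + 1) * (((n : ℝ) + 1) + a + b + 1) * (2 * ((n : ℝ) + 1) + a + b))) *
        jc a b n (k + 2) := by
  have hn : (0 : ℝ) ≤ n := n.cast_nonneg
  have hk : (0 : ℝ) ≤ k := k.cast_nonneg
  have e1 : poch (-((n + 2 : ℕ) : ℝ)) (k + 2) = (n + 2) * (n + 1) * poch (-(n : ℝ)) k := by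
    rw [poch_left, poch_left]; push_cast
    rw [show -((n : ℝ) + 2) + 1 + 1 = -n by ring]; ring
  have e2 : poch (-((n + 1 : ℕ) : ℝ)) (k + 1) = -(n + 1) * poch (-(n : ℝ)) k := by
    rw [poch_left]; push_cast
    rw [show -((n : ℝ) + 1) + 1 = -n by ring]
  have e3 : poch (-((n + 1 : ℕ) : ℝ)) (k + 2) = -(n + 1) * (poch (-(n : ℝ)) k * (-n + k)) := by
    rw [poch_left]; push_cast
    rw [show -((n : ℝ) + 1) + 1 = -n by ring, poch]
  have e4 : poch (-(n : ℝ)) (k + 2) = poch (-(n : ℝ)) k * (-n + k) * (-n + k + 1) := by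
    rw [poch, poch]; push_cast; ring
  have f1 : poch (((n + 2 : ℕ) : ℝ) + a + b + 1) (k + 2) =
      poch (n + a + b + 3) k * (n + a + b + 3 + k) * (n + a + b + 4 + k) := by
    rw [poch, poch]; push_cast
    rw [show (n : ℝ) + 2 + a + b + 1 = n + a + b + 3 by ring]; ring
  have f2 : poch (((n + 1 : ℕ) : ℝ) + a + b + 1) (k + 1) =
      (n + a + b + 2) * poch (n + a + b + 3) k := by
    rw [poch_left]; push_cast
    rw [show (n : ℝ) + 1 + a + b + 1 + 1 = n + a + b + 3 by ring]; ring
  have f3 : poch (((n + 1 : ℕ) : ℝ) + a + b + 1) (k + 2) =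
      (n + a + b + 2) * (poch (n + a + b + 3) k * (n + a + b + 3 + k)) := by
    rw [poch_left]; push_cast
    rw [show (n : ℝ) + 1 + a + b + 1 + 1 = n + a + b + 3 by ring, poch]; ring
  have f4 : poch ((n : ℝ) + a + b + 1) (k + 2) =
      (n + a + b + 1) * (n + a + b + 2) * poch (n + a + b + 3) k := by
    rw [poch_left, poch_left]
    rw [show (n : ℝ) + a + b + 1 + 1 + 1 = n + a + b + 3 by ring]; ring
  have g1 : poch (b + 1) (n + 2) = poch (b + 1) n * (b + 1 + n) * (b + 2 + n) := by
    rw [poch, poch]; push_cast; ring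
  have g2 : poch (b + 1) (n + 1) = poch (b + 1) n * (b + 1 + n) := by rw [poch]
  have g3 : poch (b + 1) (k + 2) = poch (b + 1) k * (b + 1 + k) * (b + 2 + k) := by
    rw [poch, poch]; push_cast; ring
  have g4 : poch (b + 1) (k + 1) = poch (b + 1) k * (b + 1 + k) := by rw [poch]
  have hp : poch (b + 1) k ≠ 0 := (poch_pos _ (by linarith) k).ne'
  unfold jc
  rw [e1, e2, e3, e4, f1, f2, f3, f4, g1, g2, g3, g4]
  rw [Nat.factorial_succ (n + 1), Nat.factorial_succ n, Nat.factorial_succ (k + 1),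
    Nat.factorial_succ k]
  push_cast
  have h1 : (n : ℝ) + 1 + a + b + 1 ≠ 0 := by linarith
  have h2 : 2 * ((n : ℝ) + 1) + a + b ≠ 0 := by linarith
  have h3 : b + 1 + (k : ℝ) ≠ 0 := by linarith
  have h4 : b + 2 + (k : ℝ) ≠ 0 := by linarith
  have h5 : (n.factorial : ℝ) ≠ 0 := by positivity
  have h6 : (k.factorial : ℝ) ≠ 0 := by positivity
  have h7 : (n : ℝ) + 1 ≠ 0 := by positivity
  have h8 : (n : ℝ) + 1 + 1 ≠ 0 := by positivity
  have h9 : (k : ℝ) + 1 ≠ 0 := by positivity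
  have h10 : (k : ℝ) + 1 + 1 ≠ 0 := by positivity
  generalize poch (-(n : ℝ)) k = A
  generalize poch (n + a + b + 3) k = B
  generalize poch (b + 1) n = E at *
  generalize poch (b + 1) k = F at *
  generalize (n.factorial : ℝ) = N at *
  generalize (k.factorial : ℝ) = M at *
  generalize (n : ℝ) = x at *
  generalize (k : ℝ) = y at *
  rw [pow_succ, pow_succ]
  generalize (-1 : ℝ) ^ n = S
  field_simp
  ring

theorem jc_rec1 (a b : ℝ) (hb : -1 < b) (hs : -1 < a + b) (n : ℕ) :
    jc a b (n + 2) 1 =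
      (2 * ((2 * ((n : ℝ) + 1) + a + b + 1) * (2 * ((n : ℝ) + 1) + a + b + 2) /
            (2 * (((n : ℝ) + 1) + 1) * (((n : ℝ) + 1) + a + b + 1)))) * jc a b (n + 1) 0 -
      ((2 * ((n : ℝ) + 1) + a + b + 1) * (2 * ((n : ℝ) + 1) + a + b + 2) /
            (2 * (((n : ℝ) + 1) + 1) * (((n : ℝ) + 1) + a + b + 1)) +
          (b ^ 2 - a ^ 2) * (2 * ((n : ℝ) + 1) + a + b + 1) /
            (2 * (((n : ℝ) + 1) + 1) * (((n : ℝ) + 1) + a + b + 1) *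
              (2 * ((n : ℝ) + 1) + a + b))) * jc a b (n + 1) 1 -
      ((((n : ℝ) + 1) + a) * (((n : ℝ) + 1) + b) * (2 * ((n : ℝ) + 1) + a + b + 2) /
            ((((n : ℝ) + 1) + 1) * (((n : ℝ) + 1) + a + b + 1) * (2 * ((n : ℝ) + 1) + a + b))) *
        jc a b n 1 := by
  have hn : (0 : ℝ) ≤ n := n.cast_nonneg
  unfold jc
  rw [Nat.factorial_succ (n + 1), Nat.factorial_succ n]
  simp only [poch, Nat.factorial]
  push_cast
  have h1 : (n : ℝ) + 1 + a + b + 1 ≠ 0 := by linarith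
  have h2 : 2 * ((n : ℝ) + 1) + a + b ≠ 0 := by linarith
  have h3 : b + 1 ≠ 0 := by linarith
  have h5 : (n.factorial : ℝ) ≠ 0 := by positivity
  have h7 : (n : ℝ) + 1 ≠ 0 := by positivity
  have h8 : (n : ℝ) + 1 + 1 ≠ 0 := by positivity
  generalize poch (b + 1) n = E at *
  generalize (n.factorial : ℝ) = N at *
  generalize (n : ℝ) = x at *
  rw [pow_succ, pow_succ]
  generalize (-1 : ℝ) ^ n = S
  simp only [add_zero, mul_one, one_mul]
  obtain ⟨d, hd⟩ : ∃ d, d = 2 * (x + 1) + a + b := ⟨_, rfl⟩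
  obtain ⟨e, he⟩ : ∃ e, e = x + 1 + a + b + 1 := ⟨_, rfl⟩
  rw [← hd] at h2 ⊢
  rw [← he] at h1 ⊢
  field_simp
  subst hd he
  ring

theorem jc_rec0 (a b : ℝ) (hs : -1 < a + b) (n : ℕ) :
    jc a b (n + 2) 0 =
      - ((2 * ((n : ℝ) + 1) + a + b + 1) * (2 * ((n : ℝ) + 1) + a + b + 2) /
            (2 * (((n : ℝ) + 1) + 1) * (((n : ℝ) + 1) + a + b + 1)) +
          (b ^ 2 - a ^ 2) * (2 * ((n : ℝ) + 1) + a + b + 1) /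
            (2 * (((n : ℝ) + 1) + 1) * (((n : ℝ) + 1) + a + b + 1) *
              (2 * ((n : ℝ) + 1) + a + b))) * jc a b (n + 1) 0 -
      ((((n : ℝ) + 1) + a) * (((n : ℝ) + 1) + b) * (2 * ((n : ℝ) + 1) + a + b + 2) /
            ((((n : ℝ) + 1) + 1) * (((n : ℝ) + 1) + a + b + 1) * (2 * ((n : ℝ) + 1) + a + b))) *
        jc a b n 0 := by
  have hn : (0 : ℝ) ≤ n := n.cast_nonneg
  unfold jc
  rw [Nat.factorial_succ (n + 1), Nat.factorial_succ n]
  simp only [poch, Nat.factorial]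
  push_cast
  have h1 : (n : ℝ) + 1 + a + b + 1 ≠ 0 := by linarith
  have h2 : 2 * ((n : ℝ) + 1) + a + b ≠ 0 := by linarith
  have h5 : (n.factorial : ℝ) ≠ 0 := by positivity
  have h7 : (n : ℝ) + 1 ≠ 0 := by positivity
  have h8 : (n : ℝ) + 1 + 1 ≠ 0 := by positivity
  generalize poch (b + 1) n = E at *
  generalize (n.factorial : ℝ) = N at *
  generalize (n : ℝ) = x at *
  rw [pow_succ, pow_succ]
  generalize (-1 : ℝ) ^ n = S
  obtain ⟨d, hd⟩ : ∃ d, d = 2 * (x + 1) + a + b := ⟨_, rfl⟩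
  obtain ⟨e, he⟩ : ∃ e, e = x + 1 + a + b + 1 := ⟨_, rfl⟩
  rw [← hd] at h2 ⊢
  rw [← he] at h1 ⊢
  field_simp
  subst hd he
  ring

theorem jacY_coeff (a b : ℝ) (hb : -1 < b) (hs : -1 < a + b) :
    ∀ n k, (jacY a b n).coeff k = jc a b n k
  | 0, 0 => by simp [jacY, jc, poch]
  | 0, k + 1 => by
      rw [jc, poch_neg 0 (k + 1) (by omega)]
      simp [jacY, Polynomial.coeff_one]
  | 1, 0 => by simp [jacY, jc, poch]
  | 1, 1 => by
      have h3 : b + 1 ≠ 0 := by linarith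
      simp [jacY, jc, poch, Polynomial.coeff_C, Polynomial.coeff_one]
      field_simp
      ring
  | 1, k + 2 => by
      rw [jc, poch_neg 1 (k + 2) (by omega)]
      simp [jacY, Polynomial.coeff_C, Polynomial.coeff_X, Polynomial.coeff_one]
  | n + 2, 0 => by
      rw [jc_rec0 a b hs n, jacY, ← jacY_coeff a b hb hs (n + 1) 0, ← jacY_coeff a b hb hs n 0]
      simp only [Polynomial.coeff_sub, Polynomial.coeff_C_mul, Polynomial.coeff_X_mul_zero]
      ring
  | n + 2, 1 => by
      rw [jc_rec1 a b hb hs n, jacY, ← jacY_coeff a b hb hs (n + 1) 0,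
        ← jacY_coeff a b hb hs (n + 1) 1, ← jacY_coeff a b hb hs n 1]
      simp only [Polynomial.coeff_sub, Polynomial.coeff_C_mul]
      have h := Polynomial.coeff_X_mul (jacY a b (n + 1)) 0
      rw [zero_add] at h
      rw [h]
  | n + 2, k + 2 => by
      rw [jc_rec a b hb hs n, jacY, ← jacY_coeff a b hb hs (n + 1) (k + 1),
        ← jacY_coeff a b hb hs (n + 1) (k + 2), ← jacY_coeff a b hb hs n (k + 2)]
      simp only [Polynomial.coeff_sub, Polynomial.coeff_C_mul, Polynomial.coeff_X_mul]

theorem jacY_natDegree (a b : ℝ) (hb : -1 < b) (hs : -1 < a + b) (n : ℕ) :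
    (jacY a b n).natDegree ≤ n := by
  rw [Polynomial.natDegree_le_iff_coeff_eq_zero]
  intro k hk
  rw [jacY_coeff a b hb hs, jc, poch_neg n k hk]; simp

theorem jacY_derivative (a b : ℝ) (hb : -1 < b) (hs : -1 < a + b) (m : ℕ) :
    (jacY a b (m + 1)).derivative =
      Polynomial.C ((m : ℝ) + a + b + 2) * jacY (a + 1) (b + 1) m := by
  ext k
  rw [Polynomial.coeff_derivative, Polynomial.coeff_C_mul, jacY_coeff a b hb hs,
    jacY_coeff (a + 1) (b + 1) (by linarith) (by linarith)]
  unfold jc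
  rw [poch_left (b + 1) m, poch_left (b + 1) k, poch_left _ k, poch_left _ k]
  push_cast
  rw [show -((m : ℝ) + 1) + 1 = -m by ring,
    show (m : ℝ) + 1 + a + b + 1 + 1 = m + a + b + 3 by ring,
    show (m : ℝ) + (a + 1) + (b + 1) + 1 = m + a + b + 3 by ring,
    Nat.factorial_succ, Nat.factorial_succ, pow_succ]
  push_cast
  have h1 : poch (b + 1 + 1) k ≠ 0 := (poch_pos _ (by linarith) k).ne'
  have h2 : b + 1 ≠ 0 := by linarith
  have h5 : (m.factorial : ℝ) ≠ 0 := by positivity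
  have h6 : (k.factorial : ℝ) ≠ 0 := by positivity
  have h7 : (m : ℝ) + 1 ≠ 0 := by positivity
  have h8 : (k : ℝ) + 1 ≠ 0 := by positivity
  field_simp
  ring

theorem jacobiP_deriv (a b : ℝ) (hb : -1 < b) (hs : -1 < a + b) (m : ℕ) (x : ℝ) :
    HasDerivAt (jacobiP a b (m + 1))
      (((m : ℝ) + a + b + 2) / 2 * jacobiP (a + 1) (b + 1) m x) x := by
  have h := ((jacY a b (m + 1)).hasDerivAt ((x + 1) / 2)).comp x
    (((hasDerivAt_id x).add_const (1 : ℝ)).div_const 2)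
  have e : jacobiP a b (m + 1) =
      (fun y => (jacY a b (m + 1)).eval y) ∘ (fun x : ℝ => (id x + 1) / 2) := by
    funext t; simp [jacY_eval]
  rw [e]
  refine h.congr_deriv ?_
  rw [jacY_derivative a b hb hs, Polynomial.eval_mul, Polynomial.eval_C, jacY_eval]
  ring

theorem jacobiP_neg_one (a b : ℝ) (hb : -1 < b) (hs : -1 < a + b) (n : ℕ) :
    jacobiP a b n (-1) = (-1) ^ n * poch (b + 1) n / n.factorial := by
  rw [← jacY_eval]
  norm_num
  rw [← Polynomial.coeff_zero_eq_eval_zero, jacY_coeff a b hb hs, jc]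
  simp [poch]

open Polynomial in
theorem jacobiP_factor (a b : ℝ) (hb : -1 < b) (hs : -1 < a + b) (n : ℕ)
    {ι : Type*} (s : Finset ι) (hsn : s.card = n) (v : ι → ℝ) (hv : Function.Injective v)
    (hr : ∀ i ∈ s, jacobiP a b n (v i) = 0) :
    ∃ c : ℝ, ∀ x, jacobiP a b n x = c * ∏ i ∈ s, (x - v i) := by
  set G : ℝ[X] := (jacY a b n).comp (C (1 / 2) * (X + 1)) with hG
  have hGe : ∀ x, G.eval x = jacobiP a b n x := by
    intro x
    rw [← jacY_eval, hG, eval_comp]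
    congr 1
    simp; ring
  have hdvd : (∏ i ∈ s, (X - C (v i))) ∣ G := by
    apply Finset.prod_dvd_of_coprime
    · intro i _ j _ hij
      exact pairwise_coprime_X_sub_C hv hij
    · intro i hi
      rw [dvd_iff_isRoot, IsRoot, hGe]; exact hr i hi
  obtain ⟨R, hR⟩ := hdvd
  have hQ : (∏ i ∈ s, (X - C (v i))).Monic := monic_prod_of_monic _ _ fun i _ => monic_X_sub_C _
  have hQd : (∏ i ∈ s, (X - C (v i))).natDegree = n := by
    rw [natDegree_prod_of_monic _ _ fun i _ => monic_X_sub_C _]; simp [hsn]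
  have hGd : G.natDegree ≤ n := by
    refine natDegree_comp_le.trans ?_
    have h1 : (C (1 / 2 : ℝ) * (X + 1)).natDegree ≤ 1 := by
      compute_degree
    calc _ ≤ n * 1 := Nat.mul_le_mul (jacY_natDegree a b hb hs n) h1
      _ = n := mul_one n
  have hRd : R.natDegree = 0 := by
    by_cases h0 : R = 0
    · simp [h0]
    · have := hQ.natDegree_mul' h0
      rw [← hR, hQd] at this
      omega
  refine ⟨R.coeff 0, fun x => ?_⟩
  rw [← hGe, hR, eval_mul, eval_prod, eq_C_of_natDegree_eq_zero hRd]
  simp [mul_comm]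

theorem gl_jacobi_radau2_first_column (α β : ℝ) (hα : -1 < α) (hβ : -1 < β)
    (n : ℕ) (hn : 1 ≤ n) (u : ℝ → ℝ) (x : Fin (n + 1) → ℝ)
    (hu : Differentiable ℝ u)
    (hu2 : Differentiable ℝ (deriv u))
    (hx : Function.Injective x)
    (hux : Function.Injective (u ∘ x))
    (hu' : ∀ i, deriv u (x i) ≠ 0)
    (hfirst : u (x 0) = -1)
    (hroots : ∀ i : Fin (n + 1), 0 < (i : ℕ) → jacobiP α (β + 1) n (u (x i)) = 0)
    (k : Fin (n + 1)) (hk : 1 ≤ (k : ℕ)) :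
    deriv (glL u x 0) (x k) =
      deriv u (x k) * jacobiP (α + 1) (β + 2) (n - 1) (u (x k)) * (n.factorial : ℝ) *
        (α + β + (n : ℝ) + 2) * Real.Gamma (β + 2) /
        (2 * (-1 : ℝ) ^ n * Real.Gamma (β + 2 + (n : ℝ))) := by
  obtain ⟨m, rfl⟩ : ∃ m, n = m + 1 := ⟨n - 1, by omega⟩
  have hb : -1 < β + 1 := by linarith
  have hs : -1 < α + (β + 1) := by linarith
  obtain ⟨c, hc⟩ := jacobiP_factor α (β + 1) hb hs (m + 1) (Finset.univ.erase (0 : Fin (m + 1 + 1)))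
    (by simp) (u ∘ x) hux (fun i hi => hroots i (by
      have := Finset.ne_of_mem_erase hi
      exact Nat.pos_of_ne_zero fun h => this (Fin.ext h)))
  simp only [Function.comp] at hc
  have hm1 := jacobiP_neg_one α (β + 1) hb hs (m + 1)
  have hpp : 0 < poch (β + 1 + 1) (m + 1) := poch_pos _ (by linarith) _
  have hne : jacobiP α (β + 1) (m + 1) (-1) ≠ 0 := by
    rw [hm1]
    have : (0 : ℝ) < (m + 1).factorial := by positivity
    exact div_ne_zero (mul_ne_zero (pow_ne_zero _ (by norm_num)) hpp.ne') this.ne'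
  have hc0 : c ≠ 0 := by
    rintro rfl; exact hne (by rw [hc]; simp)
  have hprod : ∀ y, ∏ i ∈ Finset.univ.erase (0 : Fin (m + 1 + 1)), (y - u (x i)) =
      jacobiP α (β + 1) (m + 1) y / c := by
    intro y; rw [hc y]; field_simp
  have hd : ∀ t, HasDerivAt (fun t => jacobiP α (β + 1) (m + 1) (u t) / c) _ t := fun t =>
    ((jacobiP_deriv α (β + 1) hb hs m (u t)).comp t (hu t).hasDerivAt).div_const c
  have hw : deriv (glW u x) (x 0) = deriv u (x 0) * (jacobiP α (β + 1) (m + 1) (-1) / c) := by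
    have e : glW u x = fun t => (u t - u (x 0)) * (jacobiP α (β + 1) (m + 1) (u t) / c) := by
      funext t
      rw [← hprod, glW, Finset.mul_prod_erase _ (fun i => u t - u (x i)) (Finset.mem_univ 0)]
    rw [e, (((hu (x 0)).hasDerivAt.sub_const (u (x 0))).fun_mul (hd (x 0))).deriv, hfirst]
    ring
  have e : glL u x 0 = fun t => (deriv u (x 0) / deriv (glW u x) (x 0)) *
      (jacobiP α (β + 1) (m + 1) (u t) / c) := by
    funext t; rw [glL, hprod]
  rw [e, ((hd (x k)).const_mul _).deriv, hw, hm1, poch_gamma (β + 2) (by linarith) (m + 1)]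
  rw [show β + 1 + 1 = β + 2 by ring] at *
  have hg : Real.Gamma (β + 2) ≠ 0 := (Real.Gamma_pos_of_pos (by linarith)).ne'
  have h0 := hu' 0
  have hf : ((m + 1).factorial : ℝ) ≠ 0 := by positivity
  have hp := hpp.ne'
  simp only [Nat.add_sub_cancel]
  push_cast
  field_simp
  ring
end
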